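/- arXiv:1906.00033 — 6 statements merged into one kernel-verified Lean document; each statement's English description precedes it below -/
import Mathlib

section
/- Let A be a C*-algebra and let a ∈ A be quasi-invertible. Then, in the unitization A⁺, the element (1 − a*)(1 − a) is positive and invertible, and there exists a quasi-unitary u ∈ A such that 1 − u = (1 − a)·((1 − a*)(1 − a))^{−1/2} in A⁺. -/
/-!
With `x = 1 - a` and `h = x* x`, quasi-invertibility of `a` says that `x` is invertible in `A⁺`,
so `h` is strictly positive, `r = h ^ (-1/2)` is a positive invertible element, and `v = x r`
satisfies `v* v = r h r = 1`; being invertible, `v` is unitary.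

It remains to see that `v` has the form `1 - u` with `u ∈ A`, i.e. that its scalar part is `1`.
The scalar part is a character `A⁺ → ℂ` that sends `x` and `h` to `1`. Since `r` is positive, its
scalar part is a nonnegative number, whose square is `1` because `r h r = 1`. Hence it is `1`.
Unitarity of `1 - u` in `A⁺` is then the quasi-unitarity of `u` in `A`.
-/

/-- The quasi-multiplication `a · b = a + b - a * b`. -/
def qmul {A : Type*} [NonUnitalRing A] (a b : A) : A := a + b - a * b

/-- `u` is a quasi-unitary if `u · u* = u* · u = 0`. -/
def IsQuasiUnitary {A : Type*} [NonUnitalRing A] [StarRing A] (u : A) : Prop :=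
  qmul u (star u) = 0 ∧ qmul (star u) u = 0

/-- `a` is quasi-invertible if there is `b` with `a · b = b · a = 0`. -/
def IsQuasiInvertible {A : Type*} [NonUnitalRing A] (a : A) : Prop :=
  ∃ b : A, qmul a b = 0 ∧ qmul b a = 0

/-- The quasi-product becomes the ordinary product of `A⁺` under `a ↦ 1 - a`. -/
lemma one_sub_inr_mul {A : Type*} [NonUnitalCStarAlgebra A] (a b : A) :
    (1 - (a : Unitization ℂ A)) * (1 - (b : Unitization ℂ A)) =
      1 - ((qmul a b : A) : Unitization ℂ A) := by
  simp only [qmul, Unitization.inr_sub, Unitization.inr_add, Unitization.inr_mul]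
  noncomm_ring

lemma qmul_eq_zero_iff {A : Type*} [NonUnitalCStarAlgebra A] (a b : A) :
    qmul a b = 0 ↔ (1 - (a : Unitization ℂ A)) * (1 - (b : Unitization ℂ A)) = 1 := by
  rw [one_sub_inr_mul, sub_eq_self]
  exact ⟨fun h => by rw [h, Unitization.inr_zero], fun h => Unitization.inr_injective h⟩

open scoped ComplexOrder in
/-- The scalar part is a positive functional on `A⁺`. -/
lemma fst_nonneg_of_nonneg {A : Type*} [NonUnitalCStarAlgebra A] [PartialOrder A]
    [StarOrderedRing A] {r : Unitization ℂ A} (hr : 0 ≤ r) : 0 ≤ r.fst := by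
  obtain ⟨s, rfl⟩ := CStarAlgebra.nonneg_iff_eq_star_mul_self.mp hr
  rw [Unitization.fst_mul, Unitization.fst_star]
  exact star_mul_self_nonneg _

/-- If `a` is quasi-invertible in a C*-algebra `A`, then in the unitization `A⁺` the
element `(1 - a*)(1 - a)` is positive and invertible, and there is a quasi-unitary
`u ∈ A` with `1 - u = (1 - a) ((1 - a*)(1 - a))^(-1/2)`, the inverse square root being
given by the continuous functional calculus. -/
theorem quasiInvertible_polar_decomposition
    {A : Type*} [NonUnitalCStarAlgebra A] [PartialOrder A] [StarOrderedRing A]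
    (a : A) (ha : IsQuasiInvertible a) :
    0 ≤ (1 - star (a : Unitization ℂ A)) * (1 - (a : Unitization ℂ A)) ∧
    IsUnit ((1 - star (a : Unitization ℂ A)) * (1 - (a : Unitization ℂ A))) ∧
    ∃ u : A, IsQuasiUnitary u ∧
      1 - (u : Unitization ℂ A) =
        (1 - (a : Unitization ℂ A)) *
          CFC.rpow ((1 - star (a : Unitization ℂ A)) * (1 - (a : Unitization ℂ A)))
            (-(1 / 2) : ℝ) := by
  obtain ⟨b, hab, hba⟩ := ha
  rw [qmul_eq_zero_iff] at hab hba
  have hfx : (1 - (a : Unitization ℂ A)).fst = 1 := by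
    rw [sub_eq_add_neg, ← Unitization.inr_neg]
    simp
  have hsx : 1 - star (a : Unitization ℂ A) = star (1 - (a : Unitization ℂ A)) := by simp
  rw [hsx]
  set x : Unitization ℂ A := 1 - (a : Unitization ℂ A) with hx
  have hux : IsUnit x := ⟨⟨x, _, hab, hba⟩, rfl⟩
  have hpos : 0 ≤ star x * x := star_mul_self_nonneg x
  have huh : IsUnit (star x * x) := hux.star.mul hux
  refine ⟨hpos, huh, ?_⟩
  rw [CFC.rpow_eq_pow]
  have hr : 0 ≤ (star x * x) ^ (-(1 / 2) : ℝ) := CFC.rpow_nonneg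
  have hur : IsUnit ((star x * x) ^ (-(1 / 2) : ℝ)) := huh.cfcRpow _ hpos
  have hrhr : (star x * x) ^ (-(1 / 2) : ℝ) * (star x * x) * (star x * x) ^ (-(1 / 2) : ℝ) = 1 := by
    nth_rewrite 2 [← CFC.rpow_one (star x * x) hpos]
    rw [← CFC.rpow_add huh, ← CFC.rpow_add huh]
    norm_num
    exact CFC.rpow_zero _ hpos
  generalize (star x * x) ^ (-(1 / 2) : ℝ) = r at *
  have hfr : r.fst = 1 := by
    have h1 := congrArg (fun z => z.fst) hrhr
    simp only [Unitization.fst_mul, Unitization.fst_star, hfx, Unitization.fst_one, star_one,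
      mul_one] at h1
    rcases mul_self_eq_one_iff.mp h1 with h | h
    · exact h
    · have h0 := fst_nonneg_of_nonneg hr
      rw [h, Complex.le_def] at h0
      norm_num at h0
  have hv : 1 - ((-(x * r).snd : A) : Unitization ℂ A) = x * r := by
    rw [Unitization.inr_neg, sub_neg_eq_add]
    ext
    · simp [hfx, hfr]
    · simp
  have hvv : star (x * r) * (x * r) = 1 := by
    rw [star_mul, (IsSelfAdjoint.of_nonneg hr).star_eq, ← hrhr]
    noncomm_ring
  -- A left inverse of an invertible element is also a right inverse.
  have hvv' : (x * r) * star (x * r) = 1 := by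
    obtain ⟨w, hw⟩ := hux.mul hur
    rw [← hw] at hvv ⊢
    rw [Units.eq_inv_of_mul_eq_one_right hvv, Units.mul_inv]
  refine ⟨-(x * r).snd, ?_, hv⟩
  generalize -(x * r).snd = u at hv
  have hsv : 1 - ((star u : A) : Unitization ℂ A) = star (x * r) := by
    rw [← hv, star_sub, star_one, Unitization.inr_star]
  exact ⟨by rw [qmul_eq_zero_iff, hv, hsv, hvv'], by rw [qmul_eq_zero_iff, hv, hsv, hvv]⟩
end

section
/- Let A be a C*-algebra and let a, b ∈ A be quasi-unitaries. Then ‖a·b*‖ ≤ ‖a − b‖, i.e., ‖a + b* − ab*‖ ≤ ‖a − b‖. -/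
/-- For quasi-unitaries `a, b` in a C*-algebra, `‖a · b*‖ ≤ ‖a - b‖`. -/
theorem norm_qmul_star_le_norm_sub
    {A : Type*} [NonUnitalCStarAlgebra A] (a b : A)
    (ha : IsQuasiUnitary a) (hb : IsQuasiUnitary b) :
    ‖qmul a (star b)‖ ≤ ‖a - b‖ := by
  obtain ⟨h1, h2⟩ := hb
  simp only [qmul, sub_eq_zero] at h1 h2
  have hy : qmul a (star b) = (a - b) - (a - b) * star b := by
    rw [sub_mul, ← h1, qmul]
    abel
  have key : ∀ x : A, (x - x * star b) * star (x - x * star b) = x * star x := by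
    intro x
    have h3 : x * star b * (b * star x) = x * star b * star x + x * b * star x := by
      rw [← mul_assoc, mul_assoc x, ← h2, mul_add, add_mul]
    rw [star_sub, star_mul, star_star, sub_mul, mul_sub, mul_sub, h3, ← mul_assoc x b]
    abel
  have h := congrArg norm (key (a - b))
  rw [← hy, CStarRing.norm_self_mul_star, CStarRing.norm_self_mul_star] at h
  exact (mul_self_inj_of_nonneg (norm_nonneg _) (norm_nonneg _)).mp h |>.le
end

section
/- Let 0 < δ < 1. If A is a C*-algebra and a ∈ A satisfies ‖a·a*‖ < δ and ‖a*·a‖ < δ, then there is a quasi-unitary u ∈ A such that ‖a − u‖ < δ. -/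
/-- The function `t ↦ (1 - t)^(-1/2) - 1`. -/
noncomputable def invSqrtSubOne (t : ℝ) : ℝ := (√(1 - t))⁻¹ - 1

/-- A self-adjoint `b` with `‖b‖ < 1` has a self-adjoint `c` (namely `(1 - b)^(-1/2) - 1`) such that
`(1 + c) (1 - b) (1 + c) = 1` and `‖c (1 - b) c‖ ≤ ‖b‖²`, both written without a unit. -/
lemma exists_invSqrt_sub_one {A : Type*} [NonUnitalCStarAlgebra A] (b : A)
    (hb : IsSelfAdjoint b) (hb1 : ‖b‖ < 1) :
    ∃ c : A, IsSelfAdjoint c ∧ c + c + c * c - b - b * c - c * b - c * b * c = 0 ∧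
      ‖c * c - c * b * c‖ ≤ ‖b‖ ^ 2 := by
  have hs : ∀ t ∈ quasispectrum ℝ b, |t| ≤ ‖b‖ := fun t ht ↦ by
    have := norm_apply_le_norm_cfcₙ (id : ℝ → ℝ) b ht
    rwa [cfcₙ_id ℝ b] at this
  have hpos : ∀ t ∈ quasispectrum ℝ b, 0 < 1 - t := fun t ht ↦ by
    linarith [le_abs_self t, hs t ht]
  have hg : ContinuousOn invSqrtSubOne (quasispectrum ℝ b) := by
    refine ContinuousOn.sub (ContinuousOn.inv₀ (by fun_prop) fun t ht ↦ ?_) continuousOn_const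
    exact (Real.sqrt_pos.mpr (hpos t ht)).ne'
  have hg0 : invSqrtSubOne 0 = 0 := by simp [invSqrtSubOne]
  have hid : ContinuousOn (fun t : ℝ ↦ t) (quasispectrum ℝ b) := continuousOn_id
  have hcc : cfcₙ (fun t ↦ invSqrtSubOne t * invSqrtSubOne t) b
      = cfcₙ invSqrtSubOne b * cfcₙ invSqrtSubOne b := cfcₙ_mul _ _ b
  have hbc : cfcₙ (fun t ↦ t * invSqrtSubOne t) b = b * cfcₙ invSqrtSubOne b := by
    rw [cfcₙ_mul (fun t ↦ t) _ b, cfcₙ_id' ℝ b]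
  have hcb : cfcₙ (fun t ↦ invSqrtSubOne t * t) b = cfcₙ invSqrtSubOne b * b := by
    rw [cfcₙ_mul _ (fun t ↦ t) b, cfcₙ_id' ℝ b]
  have hcbc : cfcₙ (fun t ↦ invSqrtSubOne t * t * invSqrtSubOne t) b
      = cfcₙ invSqrtSubOne b * b * cfcₙ invSqrtSubOne b := by
    rw [cfcₙ_mul (fun t ↦ invSqrtSubOne t * t) _ b (by fun_prop) (by simp), hcb]
  refine ⟨cfcₙ invSqrtSubOne b, cfcₙ_predicate _ b, ?_, ?_⟩
  · have key : cfcₙ (fun t ↦ invSqrtSubOne t + invSqrtSubOne t + invSqrtSubOne t * invSqrtSubOne t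
        - t - t * invSqrtSubOne t - invSqrtSubOne t * t
        - invSqrtSubOne t * t * invSqrtSubOne t) b = cfcₙ invSqrtSubOne b + cfcₙ invSqrtSubOne b
        + cfcₙ invSqrtSubOne b * cfcₙ invSqrtSubOne b - b - b * cfcₙ invSqrtSubOne b
        - cfcₙ invSqrtSubOne b * b - cfcₙ invSqrtSubOne b * b * cfcₙ invSqrtSubOne b := by
      rw [← hcc, ← hbc, ← hcbc, ← hcb]
      rw [cfcₙ_sub _ _ b (by fun_prop) (by simp [hg0]) (by fun_prop) (by simp [hg0]),
        cfcₙ_sub _ _ b (by fun_prop) (by simp [hg0]) (by fun_prop) (by simp [hg0]),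
        cfcₙ_sub _ _ b (by fun_prop) (by simp [hg0]) (by fun_prop) (by simp [hg0]),
        cfcₙ_sub _ _ b (by fun_prop) (by simp [hg0]) (by fun_prop) (by simp [hg0]),
        cfcₙ_add _ _ b (by fun_prop) (by simp [hg0]) (by fun_prop) (by simp [hg0]),
        cfcₙ_add _ _ b (by fun_prop) (by simp [hg0]) (by fun_prop) (by simp [hg0]),
        cfcₙ_id' ℝ b]
    rw [← key, ← cfcₙ_zero ℝ b]
    refine cfcₙ_congr fun t ht ↦ ?_
    have h0 := Real.sqrt_pos.mpr (hpos t ht)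
    have h1 := Real.sq_sqrt (hpos t ht).le
    have h2 : t = 1 - √(1 - t) ^ 2 := by linarith
    simp only [invSqrtSubOne, Pi.zero_apply]
    generalize √(1 - t) = s at *
    subst h2
    field_simp
    ring
  · rw [← hcbc, ← hcc, ← cfcₙ_sub ..]
    refine norm_cfcₙ_le fun t ht ↦ ?_
    have h0 := Real.sqrt_pos.mpr (hpos t ht)
    have h1 := Real.sq_sqrt (hpos t ht).le
    have h2 : t = 1 - √(1 - t) ^ 2 := by linarith
    have h3 : t ^ 2 ≤ ‖b‖ ^ 2 := by
      rw [← sq_abs]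
      exact pow_le_pow_left₀ (abs_nonneg t) (hs t ht) 2
    have h4 : invSqrtSubOne t * invSqrtSubOne t - invSqrtSubOne t * t * invSqrtSubOne t
        = (1 - √(1 - t)) ^ 2 := by
      simp only [invSqrtSubOne]
      generalize √(1 - t) = s at *
      subst h2
      field_simp
      ring
    rw [h4, Real.norm_of_nonneg (sq_nonneg _)]
    refine le_trans ?_ h3
    generalize √(1 - t) = s at *
    subst h2
    -- `t = 1 - s² = (1 - s) (1 + s)` and `1 + s ≥ 1`
    nlinarith [mul_nonneg (sq_nonneg (1 - s)) (by positivity : 0 ≤ s * (2 + s))]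

/-- Let `0 < δ < 1`. If `a` is an element of a C*-algebra with `‖a · a*‖ < δ` and
`‖a* · a‖ < δ`, then there is a quasi-unitary `u` with `‖a - u‖ < δ`. -/
theorem exists_quasiUnitary_close
    {δ : ℝ} (hδ₀ : 0 < δ) (hδ₁ : δ < 1)
    {A : Type*} [NonUnitalCStarAlgebra A] (a : A)
    (h₁ : ‖qmul a (star a)‖ < δ) (h₂ : ‖qmul (star a) a‖ < δ) :
    ∃ u : A, IsQuasiUnitary u ∧ ‖a - u‖ < δ := by
  obtain ⟨c, hc, hc1, hcn⟩ := exists_invSqrt_sub_one (qmul (star a) a)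
    (by simp [IsSelfAdjoint, qmul, add_comm]) (h₂.trans hδ₁)
  have hcs : star c = c := hc
  refine ⟨a + a * c - c, ?_, ?_⟩
  · set x : Unitization ℂ A := 1 - (a : Unitization ℂ A) with hx
    set C : Unitization ℂ A := 1 + (c : Unitization ℂ A) with hC
    have hu : ((a + a * c - c : A) : Unitization ℂ A) = 1 - x * C := by
      simp only [hx, hC, Unitization.inr_sub, Unitization.inr_add, Unitization.inr_mul]
      noncomm_ring
    have hCs : star C = C := by simp [hC, ← Unitization.inr_star, hcs]
    have hxx : x * star x = 1 - (qmul a (star a) : A) := by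
      simp only [hx, qmul, Unitization.inr_sub, Unitization.inr_add, Unitization.inr_mul,
        Unitization.inr_star, star_sub, star_one]
      noncomm_ring
    have hCC : C * (star x * x) * C = 1 := by
      have := congrArg (Unitization.inr (R := ℂ)) hc1
      simp only [qmul, Unitization.inr_sub, Unitization.inr_add, Unitization.inr_mul,
        Unitization.inr_star, Unitization.inr_zero] at this
      rw [← sub_eq_zero, ← this]
      simp only [hx, hC, star_sub, star_one]
      noncomm_ring
    have hv : star (x * C) * (x * C) = 1 := by
      rw [star_mul, hCs, ← hCC]; noncomm_ring
    -- `x` has a right inverse since `x x*` is invertible, hence so does `x C`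
    have hunit : IsUnit (x * star x) := by
      rw [hxx]
      exact isUnit_one_sub_of_norm_lt_one (by rw [Unitization.norm_inr]; exact h₁.trans hδ₁)
    obtain ⟨y, hy⟩ := hunit.exists_right_inv
    have hr : (x * C) * (star x * x * C * (star x * y)) = 1 := by
      calc _ = x * (C * (star x * x) * C) * (star x * y) := by noncomm_ring
        _ = 1 := by rw [hCC, mul_one, ← mul_assoc, hy]
    have hv' : (x * C) * star (x * C) = 1 := by
      rwa [← left_inv_eq_right_inv hv hr] at hr
    have hq (w z : A) : ((qmul w z : A) : Unitization ℂ A) = 1 - (1 - w) * (1 - z) := by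
      simp only [qmul, Unitization.inr_sub, Unitization.inr_add, Unitization.inr_mul]
      noncomm_ring
    constructor <;> apply Unitization.inr_injective (R := ℂ) <;>
      rw [hq, Unitization.inr_star, hu, star_sub, star_one, sub_sub_cancel, sub_sub_cancel,
        Unitization.inr_zero]
    · rw [hv', sub_self]
    · rw [hv, sub_self]
  · have h : star (a - (a + a * c - c)) * (a - (a + a * c - c))
        = c * c - c * qmul (star a) a * c := by
      simp only [qmul, star_sub, star_add, star_mul, hcs]
      noncomm_ring
    rw [← h, CStarRing.norm_star_mul_self, ← sq] at hcn
    exact (le_of_sq_le_sq hcn (norm_nonneg _)).trans_lt h₂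
end

section
/- Let φ : A → B be a surjective *-homomorphism between C*-algebras, and let g : [0,1] → Û(B) be a continuous path of quasi-unitaries with g(0) = 0. Then there exists a continuous path G : [0,1] → Û(A) with G(0) = 0 and φ(G(t)) = g(t) for all t ∈ [0,1]. -/
/-!
The path is treated as a single quasi-unitary of the C⋆-algebra `C(I, B)`. Postcomposition with `φ`
is a surjective ⋆-homomorphism `C(I, A) → C(I, B)` (`exists_lift_continuousMap`): a partition of
unity glues local constant lifts into approximate lifts of controlled norm, and a geometric series
of such lifts is an exact one. The passage `u ↦ 1 - u` turns quasi-unitaries into unitaries of the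
unitization, and the reparametrizations `t ↦ g (s * t)` join `1` to `1 - g` there. A unitary in the
path component of `1` is a product of exponentials of selfadjoint elements, and each of these
exponentials lifts along a surjective ⋆-homomorphism (`exists_unitary_lift`). Since the induced map
of unitizations preserves the scalar part, the lift of `1 - g` has the form `1 - H` with `H` a
quasi-unitary lift of `g`. Finally `G t = (H 0)⋆ · H t` also starts at `0`, and it still lifts `g`
because `H 0` lies in the kernel of `φ`.
-/

open unitInterval

/-- Approximate lifts of a continuous function, with a norm bound that is uniform over all
functions and over the quality of the approximation. -/
lemma exists_approx_lift {A B X : Type*} [NormedAddCommGroup A] [NormedSpace ℝ A]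
    [NormedAddCommGroup B] [NormedSpace ℝ B] [CompleteSpace A] [CompleteSpace B]
    [TopologicalSpace X] [CompactSpace X] [T2Space X]
    (f : A →L[ℝ] B) (hf : Function.Surjective f) :
    ∃ C > 0, ∀ g : C(X, B), ∃ G : C(X, A), ‖G‖ ≤ C * ‖g‖ ∧
      ‖g - (f : C(A, B)).comp G‖ ≤ 1 / 2 * ‖g‖ := by
  obtain ⟨C, hC, h⟩ := f.exists_preimage_norm_le hf
  refine ⟨C, hC, fun g ↦ ?_⟩
  by_cases hg : g = 0
  · subst hg
    refine ⟨0, by simp, ?_⟩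
    have : (f : C(A, B)).comp (0 : C(X, A)) = 0 := by ext; simp
    rw [this]; simp
  have hg' : 0 < ‖g‖ := norm_pos_iff.mpr hg
  obtain ⟨G, hG⟩ := exists_continuous_forall_mem_convex_of_local_const (X := X) (E := A)
    (t := fun x ↦ Metric.closedBall 0 (C * ‖g‖) ∩ f ⁻¹' Metric.closedBall (g x) (1 / 2 * ‖g‖))
    (fun x ↦ (convex_closedBall _ _).inter
      ((convex_closedBall _ _).linear_preimage f.toLinearMap)) (fun x ↦ by
    obtain ⟨a, ha, hn⟩ := h (g x)
    refine ⟨a, ?_⟩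
    have := Metric.tendsto_nhds.mp (g.continuous.tendsto x) (1 / 2 * ‖g‖) (by positivity)
    filter_upwards [this] with y hy
    refine ⟨?_, ?_⟩
    · simp only [mem_closedBall_zero_iff]
      exact hn.trans (by gcongr; exact g.norm_coe_le_norm x)
    · simp only [Set.mem_preimage, Metric.mem_closedBall, ha]
      rw [dist_comm]; exact hy.le)
  refine ⟨G, ?_, ?_⟩
  · rw [ContinuousMap.norm_le _ (by positivity)]
    exact fun x ↦ by simpa using (hG x).1
  · rw [ContinuousMap.norm_le _ (by positivity)]
    intro x
    have := (hG x).2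
    rw [Set.mem_preimage, Metric.mem_closedBall, dist_comm, dist_eq_norm] at this
    simpa using this

/-- Exact lifts of continuous functions, by summing approximate lifts of the successive errors as
in the open mapping theorem. -/
lemma exists_lift_continuousMap {A B X : Type*} [NormedAddCommGroup A] [NormedSpace ℝ A]
    [NormedAddCommGroup B] [NormedSpace ℝ B] [CompleteSpace A] [CompleteSpace B]
    [TopologicalSpace X] [CompactSpace X] [T2Space X]
    (f : A →L[ℝ] B) (hf : Function.Surjective f) (g : C(X, B)) :
    ∃ G : C(X, A), ∀ x, f (G x) = g x := by
  obtain ⟨C, hC, h⟩ := exists_approx_lift (X := X) f hf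
  choose L hL1 hL2 using h
  let F : C(X, A) →L[ℝ] C(X, B) := f.compLeftContinuous ℝ X
  let e : C(X, B) → C(X, B) := fun y ↦ y - F (L y)
  have he : ∀ y, ‖e y‖ ≤ 1 / 2 * ‖y‖ := hL2
  have hn : ∀ n : ℕ, ‖e^[n] g‖ ≤ (1 / 2) ^ n * ‖g‖ := by
    intro n
    induction n with
    | zero => simp
    | succ n ih =>
      rw [Function.iterate_succ_apply', pow_succ', mul_assoc]
      exact (he _).trans (by gcongr)
  have hs : Summable fun n ↦ L (e^[n] g) := by
    refine .of_norm_bounded (g := fun n ↦ C * ((1 / 2) ^ n * ‖g‖)) ?_ fun n ↦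
      (hL1 _).trans (by gcongr; exact hn n)
    exact (summable_geometric_two.mul_right _).mul_left _
  have hpart : ∀ n : ℕ, F (∑ i ∈ Finset.range n, L (e^[i] g)) = g - e^[n] g := by
    intro n
    induction n with
    | zero => simp
    | succ n ih =>
      rw [Finset.sum_range_succ, map_add, ih, Function.iterate_succ_apply']
      simp only [e]
      abel
  have h0 : Filter.Tendsto (fun n ↦ e^[n] g) Filter.atTop (nhds 0) := by
    refine squeeze_zero_norm hn ?_
    simpa using (tendsto_pow_atTop_nhds_zero_of_lt_one (r := (1 / 2 : ℝ)) (by norm_num)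
      (by norm_num)).mul_const ‖g‖
  have h1 := (F.continuous.tendsto _).comp hs.hasSum.tendsto_sum_nat
  have h2 : Filter.Tendsto (fun n ↦ g - e^[n] g) Filter.atTop (nhds (g - 0)) :=
    tendsto_const_nhds.sub h0
  have h3 : F (∑' n, L (e^[n] g)) = g := by
    rw [sub_zero] at h2
    exact tendsto_nhds_unique (h1.congr fun n ↦ hpart n) h2
  exact ⟨_, fun x ↦ DFunLike.congr_fun h3 x⟩

open scoped CStarAlgebra in
/-- A unitary in the path component of `1` lifts along a surjective ⋆-homomorphism: it is a product
of exponentials of selfadjoint elements, which lift to selfadjoint elements by taking real parts. -/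
lemma exists_unitary_lift {A B : Type*} [CStarAlgebra A] [CStarAlgebra B]
    (ψ : A →⋆ₐ[ℂ] B) (hψ : Function.Surjective ψ) (u : unitary B) (hu : u ∈ pathComponent 1) :
    ∃ v : unitary A, ψ v = u := by
  obtain ⟨l, rfl⟩ := Unitary.mem_pathComponentOne_iff.mp hu
  clear hu
  induction l with
  | nil => exact ⟨1, by simp⟩
  | cons x l ih =>
    obtain ⟨v, hv⟩ := ih
    obtain ⟨a, ha⟩ := hψ x
    have hx : ψ (realPart a : A) = x := by
      have h2 : star (x : B) = x := x.2
      rw [realPart_apply_coe, ← Complex.coe_smul, map_smul, map_add, map_star, ha,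
        h2, ← two_smul ℂ (x : B), smul_smul]
      norm_num
    refine ⟨selfAdjoint.expUnitary (realPart a) * v, ?_⟩
    have hc : Continuous ψ :=
      map_continuous ψ
    have : ψ (selfAdjoint.expUnitary (realPart a) : A) = selfAdjoint.expUnitary x := by
      rw [selfAdjoint.expUnitary_coe, selfAdjoint.expUnitary_coe, ← hx, ← map_smul]
      let +nondep : NormedAlgebra ℚ A := .restrictScalars ℚ ℂ A
      let +nondep : NormedAlgebra ℚ B := .restrictScalars ℚ ℂ B
      exact NormedSpace.map_exp ψ hc _
    rw [List.map_cons, List.prod_cons, Submonoid.coe_mul, Submonoid.coe_mul, map_mul, this, hv]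

lemma isQuasiUnitary_iff {A : Type*} [NonUnitalCStarAlgebra A] (u : A) :
    IsQuasiUnitary u ↔ (1 - (u : Unitization ℂ A)) ∈ unitary (Unitization ℂ A) := by
  have key : ∀ a b : A, qmul a b = 0 ↔
      (1 - (a : Unitization ℂ A)) * (1 - (b : Unitization ℂ A)) = 1 := by
    intro a b
    have : (1 - (a : Unitization ℂ A)) * (1 - (b : Unitization ℂ A))
        = 1 - ((qmul a b : A) : Unitization ℂ A) := by
      simp only [qmul, Unitization.inr_sub, Unitization.inr_add, Unitization.inr_mul]
      noncomm_ring
    rw [this, sub_eq_self, ← Unitization.inr_zero ℂ, Unitization.inr_injective.eq_iff]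
  rw [IsQuasiUnitary, key, key, Unitary.mem_iff, star_sub, star_one, Unitization.inr_star]
  exact and_comm

lemma isQuasiUnitary_continuousMap {A : Type*} [NonUnitalCStarAlgebra A] (g : C(I, A)) :
    IsQuasiUnitary g ↔ ∀ t, IsQuasiUnitary (g t) := by
  simp only [IsQuasiUnitary, qmul, ContinuousMap.ext_iff, ← forall_and]
  rfl

/-- The contraction `s ↦ (t ↦ g (s * t))` joins a path of quasi-unitaries to the zero path. -/
lemma mem_pathComponent_one {B : Type*} [NonUnitalCStarAlgebra B]
    (g : C(I, B)) (hg : ∀ t, IsQuasiUnitary (g t)) (hg0 : g 0 = 0)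
    (hu : (1 - (g : Unitization ℂ C(I, B))) ∈ unitary (Unitization ℂ C(I, B))) :
    (⟨_, hu⟩ : unitary (Unitization ℂ C(I, B))) ∈ pathComponent 1 := by
  let γ : C(I, C(I, B)) := (g.comp ⟨fun p : I × I ↦ p.1 * p.2, by fun_prop⟩).curry
  have hγ : ∀ s, IsQuasiUnitary (γ s) := fun s ↦
    (isQuasiUnitary_continuousMap _).mpr fun t ↦ hg (s * t)
  refine ⟨⟨⟨fun s ↦ ⟨1 - (γ s : Unitization ℂ C(I, B)), (isQuasiUnitary_iff _).mp (hγ s)⟩, ?_⟩,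
    ?_, ?_⟩⟩
  · have : Continuous (Unitization.inr : C(I, B) → Unitization ℂ C(I, B)) :=
      (Unitization.isometry_inr).continuous
    fun_prop
  · have : γ 0 = 0 := by ext t; simp [γ, hg0]
    ext1
    simp [this]
  · have : γ 1 = g := by ext t; simp [γ]
    ext1
    simp [this]

lemma qmul_isQuasiUnitary {A : Type*} [NonUnitalCStarAlgebra A] {a b : A}
    (ha : IsQuasiUnitary a) (hb : IsQuasiUnitary b) : IsQuasiUnitary (qmul a b) := by
  rw [isQuasiUnitary_iff] at *
  convert mul_mem ha hb using 1
  simp only [qmul, Unitization.inr_sub, Unitization.inr_add, Unitization.inr_mul]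
  noncomm_ring

/-- If `φ : A → B` is a surjective *-homomorphism of C*-algebras and
`g : [0,1] → Û(B)` is a continuous path of quasi-unitaries with `g 0 = 0`, then there
is a continuous path `G : [0,1] → Û(A)` with `G 0 = 0` lifting `g`, i.e. `φ (G t) = g t`
for all `t`. -/
theorem quasiUnitary_path_lifting
    {A B : Type*} [NonUnitalCStarAlgebra A] [NonUnitalCStarAlgebra B]
    (φ : A →⋆ₙₐ[ℂ] B) (hφ : Function.Surjective φ)
    (g : C(I, B)) (hg : ∀ t, IsQuasiUnitary (g t)) (hg0 : g 0 = 0) :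
    ∃ G : C(I, A), (∀ t, IsQuasiUnitary (G t)) ∧ G 0 = 0 ∧ ∀ t, φ (G t) = g t := by
  have hc : Continuous φ :=
    (NonUnitalStarAlgHom.instContinuousLinearMapClassComplex (F := A →⋆ₙₐ[ℂ] B)).map_continuous φ
  let Φ : C(I, A) →⋆ₙₐ[ℂ] C(I, B) :=
    { toFun := fun f ↦ (⟨φ, hc⟩ : C(A, B)).comp f
      map_smul' := fun c f ↦ by ext; simp
      map_zero' := by ext; simp
      map_add' := fun f f' ↦ by ext; simp
      map_mul' := fun f f' ↦ by ext; simp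
      map_star' := fun f ↦ by ext; simp [map_star] }
  have hΦ : Function.Surjective Φ := by
    intro f
    let φr : A →L[ℝ] B :=
      ContinuousLinearMap.restrictScalars ℝ
        { toFun := φ, map_add' := map_add φ, map_smul' := map_smul φ, cont := hc }
    obtain ⟨F, hF⟩ := exists_lift_continuousMap φr hφ f
    exact ⟨F, ContinuousMap.ext hF⟩
  have hu := (isQuasiUnitary_iff g).mp ((isQuasiUnitary_continuousMap g).mpr hg)
  obtain ⟨⟨v, hv⟩, hvu⟩ := exists_unitary_lift (Unitization.starMap Φ)
    (Unitization.starMap_surjective hΦ) _ (mem_pathComponent_one g hg hg0 hu)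
  obtain ⟨H, hH, hHg⟩ : ∃ H : C(I, A), IsQuasiUnitary H ∧ Φ H = g := by
    induction v using Unitization.ind with
    | inl_add_inr r a =>
      simp only [map_add, Unitization.starMap_inl, Unitization.starMap_inr] at hvu
      have h1 := congrArg (·.fst) hvu
      have h2 := congrArg (·.snd) hvu
      simp [Unitization.algebraMap_eq_inl, sub_eq_add_neg] at h1 h2
      refine ⟨-a, (isQuasiUnitary_iff _).mpr ?_, by simp [h2]⟩
      convert hv using 1
      simp [h1]
  have hHt := (isQuasiUnitary_continuousMap H).mp hH
  have hφH : ∀ t, φ (H t) = g t := fun t ↦ DFunLike.congr_fun hHg t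
  have hstar : IsQuasiUnitary (star (H 0)) := by
    have := hHt 0
    exact ⟨by simpa using this.2, by simpa using this.1⟩
  refine ⟨⟨fun t ↦ qmul (star (H 0)) (H t), by unfold qmul; fun_prop⟩,
    fun t ↦ qmul_isQuasiUnitary hstar (hHt t), (hHt 0).2, fun t ↦ ?_⟩
  simp [qmul, map_star, hφH, hg0]
end

section
/- Let A be a C*-algebra and n ≥ 1 an integer. There is a bijection between the n-th homotopy group πₙ(Û(A), 0) of the space of quasi-unitaries of A based at 0, and the set π₀(Û(C₀(ℝⁿ, A))) of path components of the space of quasi-unitaries of the C*-algebra C₀(ℝⁿ, A) of continuous A-valued functions on ℝⁿ vanishing at infinity. -/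
/-!
The sigmoid in each coordinate is an open embedding of `ℝⁿ` into the cube `Iⁿ` whose range is the
complement of the boundary. For any open embedding `Φ` of `Y` into a compact Hausdorff space `X`,
extension by zero is an isometry of `C₀(Y, A)` onto the functions in `C(X, A)` that vanish off the
range of `Φ` (`isometry_extendByZero`, `restrictC₀`). Being quasi-unitary in `C₀(Y, A)` is a
pointwise condition, so this identifies `Û(C₀(ℝⁿ, A))` homeomorphically with the space of
generalized loops `Iⁿ → Û(A)` based at `0` (`genLoopHomeoQU`). Finally, a homotopy of generalized
loops relative to the boundary is, by currying, the same as a path in the space of generalized loops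
(`genLoop_homotopic_iff_joined`), so the two sides are the path components of homeomorphic spaces.
-/

open unitInterval ZeroAtInfty

lemma isQuasiUnitary_zero {A : Type*} [NonUnitalRing A] [StarRing A] :
    IsQuasiUnitary (0 : A) := by constructor <;> simp [qmul]

/-- The space `Û(A)` of quasi-unitaries of `A`, with the subspace (norm) topology. -/
abbrev QU (A : Type*) [NonUnitalNormedRing A] [StarRing A] : Type _ :=
  {u : A // IsQuasiUnitary u}

open Topology Filter

section ExtendByZero

variable {X Y A : Type*} [TopologicalSpace X] [TopologicalSpace Y] [NormedAddCommGroup A]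

/-- Extension by zero of a function vanishing at infinity, along an open embedding into a
Hausdorff space. -/
noncomputable def extendByZero [T2Space X] {Φ : Y → X} (hΦ : IsOpenEmbedding Φ)
    (g : C₀(Y, A)) : C(X, A) where
  toFun := Function.extend Φ g 0
  continuous_toFun := by
    rw [continuous_iff_continuousAt]
    intro x
    by_cases hx : ∃ y, Φ y = x
    · obtain ⟨y, rfl⟩ := hx
      rw [← hΦ.continuousAt_iff, Function.extend_comp hΦ.injective]
      exact g.continuous.continuousAt
    · -- Off the range: `‖g‖ < ε` outside a compact `K`, and `Φ '' K` is closed and misses `x`.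
      rw [ContinuousAt, Function.extend_apply' _ _ _ hx, Metric.tendsto_nhds]
      intro ε hε
      obtain ⟨K, hK, hKg⟩ := mem_cocompact.1 (Metric.tendsto_nhds.1 g.zero_at_infty' ε hε)
      have hcl : IsClosed (Φ '' K) := (hK.image hΦ.continuous).isClosed
      filter_upwards [hcl.isOpen_compl.mem_nhds fun ⟨y, _, hy⟩ => hx ⟨y, hy⟩] with z hz
      by_cases hz' : ∃ y, Φ y = z
      · obtain ⟨y, rfl⟩ := hz'
        rw [hΦ.injective.extend_apply]
        exact hKg fun hy => hz ⟨y, hy, rfl⟩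
      · rw [Function.extend_apply' _ _ _ hz']
        simpa using hε

variable {Φ : Y → X} (hΦ : IsOpenEmbedding Φ)

@[simp]
lemma extendByZero_apply [T2Space X] (g : C₀(Y, A)) (y : Y) :
    extendByZero hΦ g (Φ y) = g y :=
  hΦ.injective.extend_apply _ _ _

lemma extendByZero_of_notMem [T2Space X] (g : C₀(Y, A)) {x : X} (hx : x ∉ Set.range Φ) :
    extendByZero hΦ g x = 0 :=
  Function.extend_apply' _ _ _ hx

lemma isometry_extendByZero [T2Space X] [CompactSpace X] :
    Isometry (extendByZero hΦ : C₀(Y, A) → C(X, A)) := by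
  refine Isometry.of_dist_eq fun f g => le_antisymm ?_ ?_
  · rw [ContinuousMap.dist_le dist_nonneg]
    intro x
    by_cases hx : x ∈ Set.range Φ
    · obtain ⟨y, rfl⟩ := hx
      rw [extendByZero_apply, extendByZero_apply, ← ZeroAtInftyContinuousMap.dist_toBCF_eq_dist]
      exact BoundedContinuousFunction.dist_coe_le_dist (f := f.toBCF) (g := g.toBCF) y
    · rw [extendByZero_of_notMem hΦ f hx, extendByZero_of_notMem hΦ g hx, dist_self]
      exact dist_nonneg
  · rw [← ZeroAtInftyContinuousMap.dist_toBCF_eq_dist,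
      BoundedContinuousFunction.dist_le dist_nonneg]
    intro y
    have := ContinuousMap.dist_apply_le_dist (f := extendByZero hΦ f) (g := extendByZero hΦ g) (Φ y)
    rwa [extendByZero_apply, extendByZero_apply] at this

/-- Restriction along an open embedding into a compact space of a function that vanishes off the
range; the result vanishes at infinity. -/
def restrictC₀ [CompactSpace X] (f : C(X, A)) (hf : ∀ x ∉ Set.range Φ, f x = 0) :
    C₀(Y, A) where
  toFun y := f (Φ y)
  continuous_toFun := f.continuous.comp hΦ.continuous
  zero_at_infty' := by
    rw [Metric.tendsto_nhds]
    intro ε hε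
    have hcpt : IsCompact {x | ε ≤ dist (f x) 0} :=
      (isClosed_le continuous_const (by fun_prop)).isCompact
    have hsub : {x | ε ≤ dist (f x) 0} ⊆ Set.range Φ := by
      intro x hx
      by_contra hxr
      rw [Set.mem_ofPred_eq, hf x hxr, dist_self] at hx
      exact hx.not_gt hε
    refine mem_cocompact.2 ⟨_, hΦ.isInducing.isCompact_preimage' hcpt hsub, ?_⟩
    intro y hy
    simpa using hy

@[simp]
lemma restrictC₀_apply [CompactSpace X] (f : C(X, A)) (hf : ∀ x ∉ Set.range Φ, f x = 0) (y : Y) :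
    restrictC₀ hΦ f hf y = f (Φ y) := rfl

lemma extendByZero_restrictC₀ [T2Space X] [CompactSpace X] (f : C(X, A))
    (hf : ∀ x ∉ Set.range Φ, f x = 0) : extendByZero hΦ (restrictC₀ hΦ f hf) = f := by
  ext x
  by_cases hx : x ∈ Set.range Φ
  · obtain ⟨y, rfl⟩ := hx
    simp
  · rw [extendByZero_of_notMem hΦ _ hx, hf x hx]

end ExtendByZero

lemma isQuasiUnitary_C₀_iff {Y A : Type*} [TopologicalSpace Y] [NonUnitalCStarAlgebra A]
    (g : C₀(Y, A)) : IsQuasiUnitary g ↔ ∀ y, IsQuasiUnitary (g y) := by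
  simp only [IsQuasiUnitary, qmul, DFunLike.ext_iff, forall_and]
  rfl

lemma isQuasiUnitary_extendByZero {X Y A : Type*} [TopologicalSpace X] [T2Space X]
    [TopologicalSpace Y] [NonUnitalCStarAlgebra A] {Φ : Y → X} (hΦ : IsOpenEmbedding Φ)
    {g : C₀(Y, A)} (hg : IsQuasiUnitary g) (x : X) : IsQuasiUnitary (extendByZero hΦ g x) := by
  by_cases hx : x ∈ Set.range Φ
  · obtain ⟨y, rfl⟩ := hx
    rw [extendByZero_apply]
    exact (isQuasiUnitary_C₀_iff _).1 hg y
  · rw [extendByZero_of_notMem _ _ hx]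
    exact isQuasiUnitary_zero

/-- The open embedding of `ℝⁿ` onto the interior of the cube: the sigmoid in each coordinate. -/
noncomputable def sigmoidCube (n : ℕ) : (Fin n → ℝ) → (Fin n → I) :=
  Pi.map fun _ => unitInterval.sigmoid

lemma isOpenEmbedding_sigmoidCube (n : ℕ) : IsOpenEmbedding (sigmoidCube n) :=
  .piMap fun _ => ⟨isEmbedding_sigmoid, unitInterval.range_sigmoid ▸ isOpen_Ioo⟩

lemma notMem_range_sigmoidCube_iff {n : ℕ} {y : Fin n → I} :
    y ∉ Set.range (sigmoidCube n) ↔ y ∈ Cube.boundary (Fin n) := by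
  simp only [sigmoidCube, Set.range_piMap, unitInterval.range_sigmoid, Set.mem_pi, Set.mem_univ,
    true_imp_iff, Set.mem_Ioo, not_forall, not_and_or, unitInterval.pos_iff_ne_zero,
    unitInterval.lt_one_iff_ne_one, not_not]
  rfl

/-- Homotopy relative to the boundary is joinability in the space of generalized loops. -/
lemma genLoop_homotopic_iff_joined {N X : Type*} [TopologicalSpace X] {x : X}
    (f g : GenLoop N X x) : GenLoop.Homotopic f g ↔ Joined f g := by
  constructor
  · rintro ⟨H⟩
    refine ⟨⟨⟨fun t => ⟨H.toHomotopy.curry t, fun y hy => ?_⟩, ?_⟩, ?_, ?_⟩⟩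
    · exact (H.eq_fst t hy).trans (f.2 y hy)
    · exact H.toHomotopy.curry.continuous.subtype_mk _
    · ext y; exact H.apply_zero y
    · ext y; exact H.apply_one y
  · rintro ⟨γ⟩
    refine ⟨⟨⟨⟨fun p => γ p.1 p.2, by fun_prop⟩, fun y => ?_, fun y => ?_⟩, fun t y hy => ?_⟩⟩
    · simp
    · simp
    · exact ((γ t).2 y hy).trans (f.2 y hy).symm

/-- Generalized loops in `Û(A)` at `0` are the quasi-unitaries of `C₀(ℝⁿ, A)`: restrict to the
interior of the cube, respectively extend by zero to the boundary. -/
noncomputable def genLoopHomeoQU (A : Type*) [NonUnitalCStarAlgebra A] (n : ℕ) :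
    GenLoop (Fin n) (QU A) ⟨0, isQuasiUnitary_zero⟩ ≃ₜ QU C₀((Fin n → ℝ), A) where
  toFun f := ⟨restrictC₀ (isOpenEmbedding_sigmoidCube n)
      ((⟨Subtype.val, continuous_subtype_val⟩ : C(QU A, A)).comp f.1)
      fun x hx => congrArg Subtype.val (f.2 x (notMem_range_sigmoidCube_iff.1 hx)),
    (isQuasiUnitary_C₀_iff _).2 fun y => (f (sigmoidCube n y)).2⟩
  invFun g := ⟨⟨fun x => ⟨extendByZero (isOpenEmbedding_sigmoidCube n) g.1 x,
      isQuasiUnitary_extendByZero (isOpenEmbedding_sigmoidCube n) g.2 x⟩,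
      Continuous.subtype_mk (map_continuous _)
        (isQuasiUnitary_extendByZero (isOpenEmbedding_sigmoidCube n) g.2)⟩,
    fun x hx => Subtype.ext (extendByZero_of_notMem _ _ (notMem_range_sigmoidCube_iff.2 hx))⟩
  left_inv f := by
    ext x
    exact DFunLike.congr_fun (extendByZero_restrictC₀ (isOpenEmbedding_sigmoidCube n)
      ((⟨Subtype.val, continuous_subtype_val⟩ : C(QU A, A)).comp f.1)
      fun x hx => congrArg Subtype.val (f.2 x (notMem_range_sigmoidCube_iff.1 hx))) x
  right_inv g := by
    ext y
    exact extendByZero_apply (isOpenEmbedding_sigmoidCube n) g.1 y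
  continuous_toFun := by
    refine Continuous.subtype_mk ?_ _
    -- `extendByZero` is inducing, and undoes the restriction.
    rw [(isometry_extendByZero (isOpenEmbedding_sigmoidCube n)).isEmbedding.continuous_iff]
    simp only [Function.comp_def, extendByZero_restrictC₀]
    exact (ContinuousMap.continuous_postcomp _).comp continuous_subtype_val
  continuous_invFun := by
    refine Continuous.subtype_mk (ContinuousMap.continuous_of_continuous_uncurry _ ?_) _
    refine Continuous.subtype_mk ?_ _
    have h := (isometry_extendByZero (A := A) (isOpenEmbedding_sigmoidCube n)).continuous
    exact ((h.comp continuous_subtype_val).comp continuous_fst).eval continuous_snd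

/-- For a C*-algebra `A` and `n ≥ 1`, the `n`-th homotopy group of `Û(A)` based at `0`
is in bijection with the set of path components of `Û(C₀(ℝⁿ, A))`, where
`C₀(ℝⁿ, A)` is the C*-algebra of continuous `A`-valued functions on `ℝⁿ` vanishing
at infinity (the `n`-fold suspension `SⁿA`). -/
theorem homotopyGroup_quasiUnitary_equiv_zerothHomotopy_suspension
    {A : Type*} [NonUnitalCStarAlgebra A] (n : ℕ) (hn : 1 ≤ n) :
    Nonempty
      (HomotopyGroup (Fin n) (QU A) ⟨0, isQuasiUnitary_zero⟩ ≃
        ZerothHomotopy (QU C₀((Fin n → ℝ), A))) := by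
  refine ⟨Quotient.congr (genLoopHomeoQU A n).toEquiv fun f g => ?_⟩
  refine (genLoop_homotopic_iff_joined f g).trans ⟨fun h => ?_, fun h => ?_⟩
  · exact h.map (genLoopHomeoQU A n).continuous
  · have := Joined.map h (genLoopHomeoQU A n).symm.continuous
    simpa using this
end

section
/- Let X be a compact Hausdorff space, B a C*-algebra, and let f₁, f₂ : [0,1] → Û(C(X, B)) be continuous paths of quasi-unitaries. Let x ∈ X be such that f₁(t)(x) = f₂(t)(x) for all t ∈ [0,1]. Then: (1) there is a closed neighbourhood Y of x and a continuous homotopy H : [0,1] × [0,1] → Û(C(Y, B)) with H(0, t) = f₁(t)|_Y and H(1, t) = f₂(t)|_Y for all t; (2) if moreover f₁(0) = f₂(0) and f₁(1) = f₂(1), then Y and H may be chosen so that additionally H(s, 0) = f₁(0)|_Y and H(s, 1) = f₁(1)|_Y for all s ∈ [0,1] (a path homotopy). -/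
/-!
An element `b` of `B` is quasi-unitary exactly when `1 - b` is unitary in the unitization of `B`
(`isQuasiUnitary_iff_mem_unitary`). Since `f₁` and `f₂` agree at `x` and `[0,1]` is compact, the
set `Y` of points `y` with `‖f₁ t y - f₂ t y‖ ≤ 1` for all `t` is a closed neighbourhood of `x`.
For unitaries `u`, `v` with `‖v - u‖ < 2`, the path `s ↦ exp (i s arg (v u*)) u` joins `u` to `v`,
depends continuously on `(s, u, v)`, and is constant if `u = v`. To return to `B` without computing
the scalar part of this path, note that the scalar part of any unitary has modulus `1`; dividing
by it (`Unitary.toQuasi`) gives a path of quasi-unitaries of `B`. Applying this pointwise on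
`Y` gives the homotopy for both claims: where `f₁ t = f₂ t`, in particular at common endpoints, it
is constant in `s`.
-/

open unitInterval

open Unitization selfAdjoint

section QuasiUnitary

variable {B : Type*} [NonUnitalCStarAlgebra B]

lemma isQuasiUnitary_iff_mem_unitary (b : B) :
    IsQuasiUnitary b ↔ (1 - (b : Unitization ℂ B)) ∈ unitary (Unitization ℂ B) := by
  have key (a c : B) : qmul a c = 0 ↔
      (1 - (a : Unitization ℂ B)) * (1 - (c : Unitization ℂ B)) = 1 := by
    have h : (1 - (a : Unitization ℂ B)) * (1 - (c : Unitization ℂ B))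
        = 1 - ((qmul a c : B) : Unitization ℂ B) := by
      simp only [qmul, inr_sub, inr_add, inr_mul]
      noncomm_ring
    rw [h, sub_eq_self, ← inr_zero ℂ, inr_injective.eq_iff]
  rw [Unitary.mem_iff, IsQuasiUnitary, key, key, star_sub, star_one, ← inr_star, and_comm]

/-- The unitary `1 - b` of the unitization attached to a quasi-unitary `b`. -/
noncomputable def IsQuasiUnitary.toUnitary {b : B} (hb : IsQuasiUnitary b) :
    unitary (Unitization ℂ B) :=
  ⟨1 - (b : Unitization ℂ B), (isQuasiUnitary_iff_mem_unitary b).1 hb⟩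

/-- The element `1 - w / λ` of `B`, where `λ` is the scalar part of the unitary `w`; since
`|λ| = 1`, the inverse of `λ` is written as its conjugate. -/
noncomputable def Unitary.toQuasi (w : unitary (Unitization ℂ B)) : B :=
  -(star (w : Unitization ℂ B).fst • (w : Unitization ℂ B).snd)

lemma Unitary.isQuasiUnitary_toQuasi (w : unitary (Unitization ℂ B)) :
    IsQuasiUnitary (Unitary.toQuasi w) := by
  have h1 : star (w : Unitization ℂ B).fst * (w : Unitization ℂ B).fst = 1 := by
    exact congr(Unitization.fstHom ℂ B $(Unitary.coe_star_mul_self w))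
  have h2 : (1 - ((Unitary.toQuasi w : B) : Unitization ℂ B))
      = star (w : Unitization ℂ B).fst • (w : Unitization ℂ B) := by
    ext
    · simpa [sub_eq_add_neg] using h1.symm
    · simp [sub_eq_add_neg, Unitary.toQuasi]
  rw [isQuasiUnitary_iff_mem_unitary, h2, Unitary.mem_iff]
  constructor
  · rw [star_smul, star_star, smul_mul_smul_comm, mul_comm, h1, Unitary.coe_star_mul_self, one_smul]
  · rw [star_smul, star_star, smul_mul_smul_comm, h1, Unitary.mul_star_self_of_mem w.2, one_smul]

lemma IsQuasiUnitary.toQuasi_toUnitary {b : B} (hb : IsQuasiUnitary b) :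
    Unitary.toQuasi hb.toUnitary = b := by
  simp [Unitary.toQuasi, IsQuasiUnitary.toUnitary, sub_eq_add_neg]

lemma Unitary.continuous_toQuasi :
    Continuous (Unitary.toQuasi : unitary (Unitization ℂ B) → B) := by
  have h1 : Continuous fun w : unitary (Unitization ℂ B) ↦ (w : Unitization ℂ B).fst :=
    Unitization.continuous_fst.comp continuous_subtype_val
  have h2 : Continuous fun w : unitary (Unitization ℂ B) ↦ (w : Unitization ℂ B).snd :=
    Unitization.continuous_snd.comp continuous_subtype_val
  exact (h1.star.smul h2).neg

end QuasiUnitary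

section Geodesic

variable {A : Type*} [CStarAlgebra A]

/-- The point `exp (i r arg (v u*)) u` of the path from `u` to `v` given by `Unitary.path`,
without its hypothesis `‖v - u‖ < 2` (when `‖v - u‖ = 2` the value at `r = 1` need not be `v`). -/
noncomputable def Unitary.geodesic (r : ℝ) (u v : unitary A) : unitary A :=
  expUnitary (r • argSelfAdjoint (v * star u)) * u

lemma Unitary.continuous_geodesic {Z : Type*}
    [TopologicalSpace Z] {r : Z → ℝ} {u v : Z → unitary A} (hr : Continuous r)
    (hu : Continuous u) (hv : Continuous v) (huv : ∀ z, ‖(v z - u z : A)‖ < 2) :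
    Continuous fun z ↦ Unitary.geodesic (r z) (u z) (v z) := by
  have hw : Continuous fun z ↦ v z * star (u z) := hv.mul hu.star
  have harg : Continuous fun z ↦ argSelfAdjoint (v z * star (u z)) := by
    refine Unitary.continuousOn_argSelfAdjoint.comp_continuous hw fun z ↦ ?_
    rw [Metric.mem_ball, Subtype.dist_eq, dist_eq_norm]
    simpa using (Unitary.norm_sub_eq (v z) (u z)) ▸ huv z
  exact (continuous_expUnitary.comp (hr.smul harg)).mul hu

lemma Unitary.geodesic_zero (u v : unitary A) : Unitary.geodesic 0 u v = u := by
  simp [Unitary.geodesic]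

lemma Unitary.geodesic_one (u v : unitary A) (huv : ‖(v - u : A)‖ < 2) :
    Unitary.geodesic 1 u v = v := by
  simp [Unitary.geodesic, Unitary.expUnitary_eq_mul_inv v u huv, mul_assoc]

lemma Unitary.geodesic_self (r : ℝ) (u : unitary A) : Unitary.geodesic r u u = u := by
  have h : argSelfAdjoint (1 : unitary A) = 0 := by
    simpa using argSelfAdjoint_expUnitary (x := (0 : selfAdjoint A)) (by simpa using Real.pi_pos)
  simp [Unitary.geodesic, h]

end Geodesic

/-- A version over an arbitrary parameter space: continuous families of quasi-unitaries at
distance less than `2` are homotopic, by a homotopy fixed wherever the families agree. -/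
lemma exists_quasiUnitary_homotopy {B Z : Type*} [NonUnitalCStarAlgebra B] [TopologicalSpace Z]
    (g₁ g₂ : C(Z, B)) (h₁ : ∀ z, IsQuasiUnitary (g₁ z)) (h₂ : ∀ z, IsQuasiUnitary (g₂ z))
    (h : ∀ z, ‖g₁ z - g₂ z‖ < 2) :
    ∃ K : C(I × Z, B), (∀ p, IsQuasiUnitary (K p)) ∧ (∀ z, K (0, z) = g₁ z) ∧
      (∀ z, K (1, z) = g₂ z) ∧ ∀ s z, g₁ z = g₂ z → K (s, z) = g₁ z := by
  have hc {g : C(Z, B)} (hg : ∀ z, IsQuasiUnitary (g z)) :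
      Continuous fun z ↦ (hg z).toUnitary :=
    (continuous_const.sub (Unitization.continuous_inr.comp g.continuous)).subtype_mk _
  have hlt (z : Z) : ‖((h₂ z).toUnitary - (h₁ z).toUnitary : Unitization ℂ B)‖ < 2 := by
    have : ((h₂ z).toUnitary - (h₁ z).toUnitary : Unitization ℂ B)
        = ((g₁ z - g₂ z : B) : Unitization ℂ B) := by
      simp [IsQuasiUnitary.toUnitary]
    rw [this, norm_inr]
    exact h z
  refine ⟨⟨fun p ↦ Unitary.toQuasi
      (Unitary.geodesic (p.1 : ℝ) (h₁ p.2).toUnitary (h₂ p.2).toUnitary), ?_⟩, ?_, ?_, ?_, ?_⟩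
  · exact Unitary.continuous_toQuasi.comp <| Unitary.continuous_geodesic
      (by fun_prop) ((hc h₁).comp continuous_snd) ((hc h₂).comp continuous_snd) fun p ↦ hlt p.2
  · exact fun p ↦ Unitary.isQuasiUnitary_toQuasi _
  · intro z
    simp [Unitary.geodesic_zero, IsQuasiUnitary.toQuasi_toUnitary]
  · intro z
    simp [Unitary.geodesic_one _ _ (hlt z), IsQuasiUnitary.toQuasi_toUnitary]
  · intro s z hz
    have h12 : (h₂ z).toUnitary = (h₁ z).toUnitary := by
      simp [IsQuasiUnitary.toUnitary, hz]
    simp [h12, Unitary.geodesic_self, IsQuasiUnitary.toQuasi_toUnitary]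

/-- Let `X` be a compact Hausdorff space, `B` a C*-algebra, and `f₁, f₂` continuous
paths of quasi-unitaries in `C(X, B)` agreeing at the fiber over `x ∈ X`.  Then:
(1) there are a closed neighbourhood `Y` of `x` and a homotopy through quasi-unitaries
of `C(Y, B)` from `t ↦ f₁(t)|_Y` to `t ↦ f₂(t)|_Y`; (2) if moreover `f₁` and `f₂`
agree at the endpoints, then `Y` and the homotopy can be chosen so that the homotopy
fixes the endpoints (a path homotopy). -/
theorem quasiUnitary_paths_locally_homotopic
    {X : Type*} [TopologicalSpace X] [CompactSpace X] [T2Space X]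
    {B : Type*} [NonUnitalCStarAlgebra B]
    (f₁ f₂ : C(I, C(X, B)))
    (h₁ : ∀ t, IsQuasiUnitary (f₁ t)) (h₂ : ∀ t, IsQuasiUnitary (f₂ t))
    (x : X) (hx : ∀ t, f₁ t x = f₂ t x) :
    (∃ Y : Set X, IsClosed Y ∧ x ∈ interior Y ∧
      ∃ H : C(I × I, C(Y, B)),
        (∀ s t, IsQuasiUnitary (H (s, t))) ∧
        (∀ t, H (0, t) = (f₁ t).restrict Y) ∧
        (∀ t, H (1, t) = (f₂ t).restrict Y)) ∧
    (f₁ 0 = f₂ 0 → f₁ 1 = f₂ 1 →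
      ∃ Y : Set X, IsClosed Y ∧ x ∈ interior Y ∧
        ∃ H : C(I × I, C(Y, B)),
          (∀ s t, IsQuasiUnitary (H (s, t))) ∧
          (∀ t, H (0, t) = (f₁ t).restrict Y) ∧
          (∀ t, H (1, t) = (f₂ t).restrict Y) ∧
          (∀ s, H (s, 0) = (f₁ 0).restrict Y) ∧
          (∀ s, H (s, 1) = (f₁ 1).restrict Y)) := by
  -- A single `Y` and `H` serve both claims.
  obtain ⟨Y, hY, hxY, H, hH, hH0, hH1, hHc⟩ : ∃ Y : Set X, IsClosed Y ∧ x ∈ interior Y ∧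
      ∃ H : C(I × I, C(Y, B)), (∀ s t, IsQuasiUnitary (H (s, t))) ∧
        (∀ t, H (0, t) = (f₁ t).restrict Y) ∧ (∀ t, H (1, t) = (f₂ t).restrict Y) ∧
        ∀ s t, f₁ t = f₂ t → H (s, t) = (f₁ t).restrict Y := by
    have hq {f : C(X, B)} (hf : IsQuasiUnitary f) (y : X) : IsQuasiUnitary (f y) :=
      ⟨congr($(hf.1) y), congr($(hf.2) y)⟩
    -- `F y` is the path `t ↦ f₁ t y - f₂ t y`; its sup norm is continuous in `y`.
    let F : C(X, C(I, B)) := ContinuousMap.curry ⟨fun p ↦ f₁ p.2 p.1 - f₂ p.2 p.1, by fun_prop⟩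
    let Y : Set X := {y | ‖F y‖ ≤ 1}
    have hFx : F x = 0 := by
      ext t
      simp [F, hx]
    have hYn : x ∈ interior Y := by
      refine mem_interior.2 ⟨{y | ‖F y‖ < 1}, fun y (hy : ‖F y‖ < 1) ↦ hy.le,
        isOpen_lt (by fun_prop) continuous_const, ?_⟩
      simp [hFx]
    obtain ⟨K, hK, hK0, hK1, hKc⟩ := exists_quasiUnitary_homotopy
      (Z := I × Y) ⟨fun p ↦ f₁ p.1 p.2, by fun_prop⟩ ⟨fun p ↦ f₂ p.1 p.2, by fun_prop⟩
      (fun p ↦ hq (h₁ p.1) p.2) (fun p ↦ hq (h₂ p.1) p.2) (fun p ↦ by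
        have h1 : ‖F p.2 p.1‖ ≤ 1 := ((F p.2).norm_coe_le_norm p.1).trans p.2.2
        exact lt_of_le_of_lt h1 one_lt_two)
    refine ⟨Y, isClosed_le (by fun_prop) continuous_const, hYn,
      ContinuousMap.curry ⟨fun q : (I × I) × Y ↦ K (q.1.1, (q.1.2, q.2)), by fun_prop⟩,
      ?_, ?_, ?_, ?_⟩
    · exact fun s t ↦ ⟨ContinuousMap.ext fun y ↦ (hK (s, (t, y))).1,
        ContinuousMap.ext fun y ↦ (hK (s, (t, y))).2⟩
    · exact fun t ↦ ContinuousMap.ext fun y ↦ hK0 (t, y)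
    · exact fun t ↦ ContinuousMap.ext fun y ↦ hK1 (t, y)
    · exact fun s t ht ↦ ContinuousMap.ext fun y ↦ hKc s (t, y) congr($ht y)
  exact ⟨⟨Y, hY, hxY, H, hH, hH0, hH1⟩, fun e0 e1 ↦
    ⟨Y, hY, hxY, H, hH, hH0, hH1, fun s ↦ hHc s 0 e0, fun s ↦ hHc s 1 e1⟩⟩
end
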